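/- There is a constant c such that the following holds. Suppose q∈{1,…,r}, i_{t_q}∈B_1∪{1}, and i_{t_q}∉B⁺∖B; let N_q=|S_{t_q}^B(C)|. Then there is a regular dag-like resolution derivation from Stone(G,m) of size at most c·N_q which contains, for every i_ℓ∈S_{t_q}^B(C) with i_ℓ∉B⁺, the clause C_ℓ∨E_ℓ∨r_{j_ℓ}, and in which the subderivation of this clause uses as resolution variables exactly the variables r_{j_{ℓ′}} such that j_{ℓ′}≠j_ℓ, i_{ℓ′}∈S_ℓ^B(C), and i_{ℓ′}∉B⁺. -/

import Mathlib

open scoped Classical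

/-! ### Clauses and literals -/

abbrev Lit (V : Type) := V × Bool
abbrev Clause (V : Type) := Finset (V × Bool)

/-- Propositional variables for the Stone principle: `p i j` and `r j`. -/
inductive SV where
  | p (i j : ℕ) : SV
  | r (j : ℕ) : SV
deriving DecidableEq

/-- A dag on vertices `1,…,N` with unique sink `1`, in which every non-source vertex
(the vertices `1,…,n`) has exactly the two predecessors `p1 i` and `p2 i`,
every edge `(i′,i)` satisfies `i′ > i`, and the sources are exactly `n+1,…,N`. -/
structure StoneDag where
  N : ℕ
  n : ℕ
  p1 : ℕ → ℕ
  p2 : ℕ → ℕ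
  n_lt_N : n < N
  p1_gt : ∀ i, 1 ≤ i → i ≤ n → i < p1 i
  p2_gt : ∀ i, 1 ≤ i → i ≤ n → i < p2 i
  p1_le : ∀ i, 1 ≤ i → i ≤ n → p1 i ≤ N
  p2_le : ∀ i, 1 ≤ i → i ≤ n → p2 i ≤ N
  p_ne : ∀ i, 1 ≤ i → i ≤ n → p1 i ≠ p2 i
  unique_sink : ∀ i, 2 ≤ i → i ≤ N → ∃ v, 1 ≤ v ∧ v ≤ n ∧ (p1 v = i ∨ p2 v = i)

/-- The clause set `Stone(G,m)`. -/
def stoneClauses (G : StoneDag) (m : ℕ) : Set (Clause SV) :=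
  { C | ∃ i, 1 ≤ i ∧ i ≤ G.N ∧
      C = (Finset.Icc 1 m).image (fun j => ((SV.p i j, true) : Lit SV)) } ∪
  { C | ∃ i j, G.n < i ∧ i ≤ G.N ∧ 1 ≤ j ∧ j ≤ m ∧
      C = {(SV.p i j, false), (SV.r j, true)} } ∪
  { C | ∃ j, 1 ≤ j ∧ j ≤ m ∧ C = {(SV.p 1 j, false), (SV.r j, false)} } ∪
  { C | ∃ i j j' j'', 1 ≤ i ∧ i ≤ G.n ∧ 1 ≤ j ∧ j ≤ m ∧ 1 ≤ j' ∧ j' ≤ m ∧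
      1 ≤ j'' ∧ j'' ≤ m ∧ j ≠ j' ∧ j ≠ j'' ∧
      C = {(SV.p (G.p1 i) j', false), (SV.r j', false),
           (SV.p (G.p2 i) j'', false), (SV.r j'', false),
           (SV.p i j, false), (SV.r j, true)} }

/-! ### Resolution inference rules -/

/-- `(A ∖ {x}) ∪ (B ∖ {¬x})`. -/
def wres {V : Type} [DecidableEq V] (x : V) (A B : Clause V) : Clause V :=
  A.erase (x, true) ∪ B.erase (x, false)

/-- w-resolution inference. -/
def wstep {V : Type} [DecidableEq V] (x : V) (A B C : Clause V) : Prop :=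
  C = wres x A B

/-- ordinary resolution inference. -/
def rstep {V : Type} [DecidableEq V] (x : V) (A B C : Clause V) : Prop :=
  (x, true) ∈ A ∧ (x, false) ∈ B ∧ C = wres x A B

/-- degenerate resolution inference. -/
def dstep {V : Type} [DecidableEq V] (x : V) (A B C : Clause V) : Prop :=
  ((x, true) ∈ A ∧ (x, false) ∈ B ∧ C = wres x A B) ∨
  ((x, true) ∈ A ∧ (x, false) ∉ B ∧ C = B) ∨
  ((x, true) ∉ A ∧ (x, false) ∈ B ∧ C = A) ∨
  ((x, true) ∉ A ∧ (x, false) ∉ B ∧ (C = A ∨ C = B))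

/-! ### Tree-like proofs -/

/-- Binary proof trees: each node is labeled with a clause, internal nodes also
with a resolution variable. -/
inductive PTree (V : Type) [DecidableEq V] where
  | leaf : Clause V → PTree V
  | node : Clause V → V → PTree V → PTree V → PTree V

namespace PTree

variable {V : Type} [DecidableEq V]

/-- The clause labeling the root. -/
def clause : PTree V → Clause V
  | leaf c => c
  | node c _ _ _ => c

/-- Number of nodes. -/
def size : PTree V → ℕ
  | leaf _ => 1
  | node _ _ t1 t2 => t1.size + t2.size + 1

/-- The set of variables used as resolution variables. -/
def resVars : PTree V → Finset V
  | leaf _ => ∅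
  | node _ x t1 t2 => insert x (t1.resVars ∪ t2.resVars)

/-- No variable is used as a resolution variable more than once on any
root-to-leaf path. -/
def regular : PTree V → Prop
  | leaf _ => True
  | node _ x t1 t2 => x ∉ t1.resVars ∧ x ∉ t2.resVars ∧ t1.regular ∧ t2.regular

/-- Every internal node is obtained from its children by the inference `step`. -/
def wf (step : V → Clause V → Clause V → Clause V → Prop) : PTree V → Prop
  | leaf _ => True
  | node c x t1 t2 => step x t1.clause t2.clause c ∧ t1.wf step ∧ t2.wf step

/-- All clauses occurring in the tree. -/
def clauses : PTree V → Set (Clause V)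
  | leaf c => {c}
  | node c _ t1 t2 => t1.clauses ∪ t2.clauses ∪ {c}

/-- Every leaf is labeled by a clause of `Γ` or by a clause occurring strictly
earlier in postorder; `S` is the set of clauses occurring before this subtree. -/
def lemmasOK (Γ : Set (Clause V)) : PTree V → Set (Clause V) → Prop
  | leaf c, S => c ∈ Γ ∨ c ∈ S
  | node _ _ t1 t2, S => t1.lemmasOK Γ S ∧ t2.lemmasOK Γ (S ∪ t1.clauses)

/-- Every leaf is labeled by a clause of `Γ`. -/
def leavesIn (Γ : Set (Clause V)) : PTree V → Prop
  | leaf c => c ∈ Γ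
  | node _ _ t1 t2 => t1.leavesIn Γ ∧ t2.leavesIn Γ

/-- Postorder scan computing, from the set `L` of clauses learned so far
(initially `Γ`), the pair of (i) the set of clauses learned after traversing the
subtree — a clause becomes learned when it is the final clause of an input
subderivation, i.e. a subderivation each of whose inferences has at least one
hypothesis that is already learned — and (ii) whether this subtree is an input
subderivation. -/
def scan : PTree V → Set (Clause V) → Set (Clause V) × Prop
  | leaf _, L => (L, True)
  | node c _ t1 t2, L =>
      let r1 := t1.scan L
      let r2 := t2.scan r1.1
      let inp : Prop := r1.2 ∧ r2.2 ∧ (t1.clause ∈ r1.1 ∨ t2.clause ∈ r2.1)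
      ({ d | d ∈ r2.1 ∨ (inp ∧ d = c) }, inp)

/-- Every leaf is labeled by a learned clause (a clause of the initial set `L`,
or one derived by an input subderivation strictly earlier in postorder). -/
def lemOK : PTree V → Set (Clause V) → Prop
  | leaf c, L => c ∈ L
  | node _ _ t1 t2, L => t1.lemOK L ∧ t2.lemOK (t1.scan L).1

end PTree

/-- regWRTL refutation of `Γ`. -/
def RegWRTLRefutation {V : Type} [DecidableEq V] (Γ : Set (Clause V)) (T : PTree V) : Prop :=
  T.clause = ∅ ∧ T.wf wstep ∧ T.regular ∧ T.lemmasOK Γ ∅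

/-- pool resolution refutation of `Γ`. -/
def PoolRefutation {V : Type} [DecidableEq V] (Γ : Set (Clause V)) (T : PTree V) : Prop :=
  T.clause = ∅ ∧ T.wf dstep ∧ T.regular ∧ T.lemmasOK Γ ∅

/-- regRTL refutation of `Γ`. -/
def RegRTLRefutation {V : Type} [DecidableEq V] (Γ : Set (Clause V)) (T : PTree V) : Prop :=
  T.clause = ∅ ∧ T.wf rstep ∧ T.regular ∧ T.lemmasOK Γ ∅

/-- regRTI refutation of `Γ`: all lemmas are input lemmas. -/
def RegRTIRefutation {V : Type} [DecidableEq V] (Γ : Set (Clause V)) (T : PTree V) : Prop :=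
  T.clause = ∅ ∧ T.wf rstep ∧ T.regular ∧ T.lemOK Γ

/-- regRTI derivation of the clause `D` from `Γ`. -/
def RegRTIDeriv {V : Type} [DecidableEq V] (Γ : Set (Clause V)) (D : Clause V)
    (T : PTree V) : Prop :=
  T.clause = D ∧ T.wf rstep ∧ T.regular ∧ T.lemOK Γ ∧
  ∀ x ∈ T.resVars, (x, true) ∉ D ∧ (x, false) ∉ D

/-- regular tree-like resolution derivation of the clause `D` from `Γ`. -/
def RegTreeDeriv {V : Type} [DecidableEq V] (Γ : Set (Clause V)) (D : Clause V)
    (T : PTree V) : Prop :=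
  T.clause = D ∧ T.wf rstep ∧ T.regular ∧ T.leavesIn Γ ∧
  ∀ x ∈ T.resVars, (x, true) ∉ D ∧ (x, false) ∉ D

/-! ### Dag-like derivations -/

/-- A dag-like resolution derivation: a sequence of `len` clauses, each an
axiom (`just i = none`) or obtained by resolution from two earlier clauses. -/
structure DagDeriv (V : Type) [DecidableEq V] where
  len : ℕ
  cl : ℕ → Clause V
  just : ℕ → Option (ℕ × ℕ × V)

namespace DagDeriv

variable {V : Type} [DecidableEq V]

/-- Validity relative to the initial clause set `Γ`. -/
def ok (D : DagDeriv V) (Γ : Set (Clause V)) : Prop :=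
  ∀ i, i < D.len →
    match D.just i with
    | none => D.cl i ∈ Γ
    | some (a, b, x) => a < i ∧ b < i ∧ rstep x (D.cl a) (D.cl b) (D.cl i)

/-- `j` is a premise of `i`. -/
def prem (D : DagDeriv V) (i j : ℕ) : Prop :=
  ∃ a b x, D.just i = some (a, b, x) ∧ (j = a ∨ j = b)

/-- `j` lies in the subderivation of `i` (is reachable from `i` in the dag). -/
def reach (D : DagDeriv V) : ℕ → ℕ → Prop := Relation.ReflTransGen D.prem

/-- `x` is the resolution variable of the inference at `i`. -/
def resAt (D : DagDeriv V) (i : ℕ) (x : V) : Prop := ∃ a b, D.just i = some (a, b, x)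

/-- No variable is used as resolution variable twice along a path of the dag. -/
def regular (D : DagDeriv V) : Prop :=
  ∀ i a b x, D.just i = some (a, b, x) →
    ∀ j, (D.reach a j ∨ D.reach b j) → ¬ D.resAt j x

/-- The subderivation of `i` uses `x` as a resolution variable. -/
def usesVar (D : DagDeriv V) (i : ℕ) (x : V) : Prop := ∃ j, D.reach i j ∧ D.resAt j x

end DagDeriv

/-! ### Supports, bypassing, and the sets `B`, `B⁺`, `S_ℓ^B(C)` for a clause
`C = ¬p_{i_1,j_1} ∨ … ∨ ¬p_{i_k,j_k}` given by `k` and the functions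
`I J : ℕ → ℕ` (with `I ℓ = i_ℓ`, `J ℓ = j_ℓ` for `1 ≤ ℓ ≤ k`). -/

/-- Index `ℓ` is bypassed. -/
def bypassed (k : ℕ) (J : ℕ → ℕ) (ℓ : ℕ) : Prop :=
  ∃ ℓ', ℓ < ℓ' ∧ ℓ' ≤ k ∧ J ℓ' = J ℓ

/-- `ℓ'` is the max-bypasser of `ℓ`. -/
def maxByp (k : ℕ) (J : ℕ → ℕ) (ℓ ℓ' : ℕ) : Prop :=
  ℓ < ℓ' ∧ ℓ' ≤ k ∧ J ℓ' = J ℓ ∧ ∀ a, ℓ < a → a ≤ k → J a = J ℓ → a ≤ ℓ'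

/-- `i_{ℓ'}` directly supports `i_ℓ`. -/
def dsup (G : StoneDag) (k : ℕ) (I J : ℕ → ℕ) (ℓ' ℓ : ℕ) : Prop :=
  1 ≤ ℓ ∧ ℓ < ℓ' ∧ ℓ' ≤ k ∧
  (maxByp k J ℓ ℓ' ∨
    (¬ bypassed k J ℓ ∧ (I ℓ' = G.p1 (I ℓ) ∨ I ℓ' = G.p2 (I ℓ))))

/-- `i_a` supports `i_b`: reflexive transitive closure of direct support. -/
def supp (G : StoneDag) (k : ℕ) (I J : ℕ → ℕ) : ℕ → ℕ → Prop :=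
  Relation.ReflTransGen (dsup G k I J)

/-- `dom(C)` as a set of vertices. -/
def domv (k : ℕ) (I : ℕ → ℕ) : Set ℕ := { v | ∃ a, 1 ≤ a ∧ a ≤ k ∧ I a = v }

/-- `S_ℓ(C)`: the set of vertices of `dom(C)` supporting `i_ℓ`. -/
def suppSet (G : StoneDag) (k : ℕ) (I J : ℕ → ℕ) (ℓ : ℕ) : Set ℕ :=
  { v | ∃ a, 1 ≤ a ∧ a ≤ k ∧ I a = v ∧ supp G k I J a ℓ }

/-- `i_ℓ ∈ B`: not bypassed and some predecessor outside `dom(C)`. -/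
def Bidx (G : StoneDag) (k : ℕ) (I J : ℕ → ℕ) (ℓ : ℕ) : Prop :=
  1 ≤ ℓ ∧ ℓ ≤ k ∧ ¬ bypassed k J ℓ ∧
  (G.p1 (I ℓ) ∉ domv k I ∨ G.p2 (I ℓ) ∉ domv k I)

/-- `i_ℓ ∈ B₁`: exactly one predecessor outside `dom(C)`. -/
def B1idx (G : StoneDag) (k : ℕ) (I J : ℕ → ℕ) (ℓ : ℕ) : Prop :=
  Bidx G k I J ℓ ∧ (G.p1 (I ℓ) ∈ domv k I ∨ G.p2 (I ℓ) ∈ domv k I)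

/-- `i_ℓ ∈ B₂`: both predecessors outside `dom(C)`. -/
def B2idx (G : StoneDag) (k : ℕ) (I J : ℕ → ℕ) (ℓ : ℕ) : Prop :=
  1 ≤ ℓ ∧ ℓ ≤ k ∧ ¬ bypassed k J ℓ ∧
  G.p1 (I ℓ) ∉ domv k I ∧ G.p2 (I ℓ) ∉ domv k I

/-- `i_ℓ ∈ B⁺`: in `B`, or bypassed with max-bypasser in `B`. -/
def Bplus (G : StoneDag) (k : ℕ) (I J : ℕ → ℕ) (ℓ : ℕ) : Prop :=
  Bidx G k I J ℓ ∨ (1 ≤ ℓ ∧ ℓ ≤ k ∧ ∃ ℓ', maxByp k J ℓ ℓ' ∧ Bidx G k I J ℓ')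

/-- Membership in `S_ℓ^B(C)` (on indices). -/
inductive SBmem (G : StoneDag) (k : ℕ) (I J : ℕ → ℕ) (ℓ : ℕ) : ℕ → Prop where
  | base : SBmem G k I J ℓ ℓ
  | byp (a b : ℕ) : SBmem G k I J ℓ a → (a = ℓ ∨ ¬ Bidx G k I J a) →
      maxByp k J a b → ¬ Bidx G k I J b → SBmem G k I J ℓ b
  | pred (a b : ℕ) : SBmem G k I J ℓ a → (a = ℓ ∨ ¬ Bidx G k I J a) →
      ¬ bypassed k J a → 1 ≤ b → b ≤ k →
      (I b = G.p1 (I a) ∨ I b = G.p2 (I a)) → SBmem G k I J ℓ b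

/-- The clause `C_ℓ`. -/
noncomputable def Clc (G : StoneDag) (k : ℕ) (I J : ℕ → ℕ) (ℓ : ℕ) : Clause SV :=
  ((Finset.Icc 1 k).filter fun a =>
      SBmem G k I J ℓ a ∧ ¬(a = ℓ ∧ bypassed k J ℓ)).image
    fun a => ((SV.p (I a) (J a), false) : Lit SV)

/-- The clause `E_ℓ`. -/
noncomputable def Elc (G : StoneDag) (k : ℕ) (I J : ℕ → ℕ) (ℓ : ℕ) : Clause SV :=
  ((Finset.Icc 1 k).filter fun a =>
      SBmem G k I J ℓ a ∧ Bplus G k I J a ∧ (Bidx G k I J ℓ → a ≠ ℓ)).image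
    fun a => ((SV.r (J a), false) : Lit SV)

/-- `t_1,…,t_r` enumerates the indices of `B ∪ {1}` in decreasing order. -/
def EnumB (G : StoneDag) (k : ℕ) (I J : ℕ → ℕ) (r : ℕ) (t : ℕ → ℕ) : Prop :=
  (∀ q, 1 ≤ q → q ≤ r → (Bidx G k I J (t q) ∨ t q = 1)) ∧
  (∀ q q', 1 ≤ q → q < q' → q' ≤ r → t q' < t q) ∧
  (∀ ℓ, Bidx G k I J ℓ ∨ ℓ = 1 → ∃ q, 1 ≤ q ∧ q ≤ r ∧ t q = ℓ)

/-- The clause `F_q`. -/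
noncomputable def Fcl (G : StoneDag) (k : ℕ) (I J : ℕ → ℕ) (r : ℕ) (t : ℕ → ℕ)
    (q : ℕ) : Clause SV :=
  if q = r ∧ ¬ Bidx G k I J 1 then Elc G k I J 1
  else (Finset.Icc 1 (q - 1)).image fun q' => ((SV.r (J (t q')), false) : Lit SV)

/-- The standing hypotheses on the clause `C`: `k ≥ 1`, `1 = i_1 < … < i_k ≤ n`,
`j_ℓ ∈ {1,…,m}`, and every vertex of `dom(C)` supports vertex `1`. -/
def GoodC (G : StoneDag) (m k : ℕ) (I J : ℕ → ℕ) : Prop :=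
  1 ≤ k ∧ I 1 = 1 ∧ I k ≤ G.n ∧
  (∀ a b, 1 ≤ a → a < b → b ≤ k → I a < I b) ∧
  (∀ a, 1 ≤ a → a ≤ k → 1 ≤ J a ∧ J a ≤ m) ∧
  (∀ a, 1 ≤ a → a ≤ k → supp G k I J a 1)

/-!
For a vertex `i_e ∉ B` that is not bypassed, write `L_e` for `C_e ∨ E_e ∨ r_{j_e}`. Both
predecessors `i_a`, `i_{a'}` of `i_e` lie in `dom(C)`, so
`¬p_e ∨ ¬p_a ∨ ¬p_{a'} ∨ ¬r_{j_a} ∨ ¬r_{j_{a'}} ∨ r_{j_e}` is a clause of type (4). Let `i_b` be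
the last vertex of `dom(C)` carrying the stone `j_a`. If `i_b ∈ B`, the literal `¬r_{j_a}` is one of
the literals of `E_e`; otherwise `L_b` ends in `r_{j_a}`, and resolving with it replaces `¬r_{j_a}`
by the literals that `i_a` contributes to `C_e ∨ E_e`. After the same step for `a'`, the clause is
`L_e`. Treating the vertices in decreasing order, each costs at most three clauses. If the last
vertex carrying `j_a` precedes the one carrying `j_{a'}`, then `j_{a'}` is resolved first: `r_{j_a}`
cannot have been used in deriving the lemma for `j_{a'}`, which only involves later vertices, and
this gives regularity. A vertex `i_ℓ ∉ B⁺` that is bypassed has the same clause and the same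
resolution variables as its max-bypasser.
-/

/-! ### Growing regular derivations -/

namespace DagDeriv

variable {V : Type} [DecidableEq V] {Γ : Set (Clause V)} {D D' : DagDeriv V}

theorem ok_iff : D.ok Γ ↔ ∀ i < D.len, (D.just i = none → D.cl i ∈ Γ) ∧
    ∀ a b x, D.just i = some (a, b, x) → a < i ∧ b < i ∧ rstep x (D.cl a) (D.cl b) (D.cl i) := by
  refine forall₂_congr fun i _ => ?_
  rcases D.just i with _ | ⟨a, b, x⟩
  · simp
  · simp only [reduceCtorEq, false_imp_iff, true_and, Option.some.injEq, Prod.mk.injEq]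
    exact ⟨by rintro h _ _ _ ⟨rfl, rfl, rfl⟩; exact h, fun h => h a b x ⟨rfl, rfl, rfl⟩⟩

theorem usesVar_iff {i : ℕ} {y : V} :
    D.usesVar i y ↔ ∃ a b x, D.just i = some (a, b, x) ∧
      (y = x ∨ D.usesVar a y ∨ D.usesVar b y) := by
  constructor
  · rintro ⟨j, hj, hy⟩
    rcases Relation.ReflTransGen.cases_head hj with rfl | ⟨c, ⟨a, b, x, hab, rfl | rfl⟩, hcj⟩
    · obtain ⟨a, b, hab⟩ := hy
      exact ⟨a, b, y, hab, Or.inl rfl⟩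
    · exact ⟨_, b, x, hab, Or.inr (Or.inl ⟨j, hcj, hy⟩)⟩
    · exact ⟨a, _, x, hab, Or.inr (Or.inr ⟨j, hcj, hy⟩)⟩
  · rintro ⟨a, b, x, hab, rfl | ⟨j, hj, hy⟩ | ⟨j, hj, hy⟩⟩
    · exact ⟨i, .refl, a, b, hab⟩
    · exact ⟨j, .head ⟨a, b, x, hab, Or.inl rfl⟩ hj, hy⟩
    · exact ⟨j, .head ⟨a, b, x, hab, Or.inr rfl⟩ hj, hy⟩

theorem regular_iff :
    D.regular ↔ ∀ i a b x, D.just i = some (a, b, x) → ¬ D.usesVar a x ∧ ¬ D.usesVar b x := by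
  refine forall₄_congr fun i a b x => imp_congr_right fun _ => ?_
  simp only [usesVar, not_exists, not_and, or_imp, forall_and]

theorem usesVar_congr {n : ℕ}
    (hlt : ∀ i < n, ∀ a b x, D.just i = some (a, b, x) → a < i ∧ b < i)
    (hjust : ∀ i < n, D'.just i = D.just i) {i : ℕ} (hi : i < n) {y : V} :
    D'.usesVar i y ↔ D.usesVar i y := by
  induction i using Nat.strong_induction_on with
  | _ i ih =>
    rw [usesVar_iff, usesVar_iff, hjust i hi]
    refine exists₃_congr fun a b x => and_congr_right fun h => ?_
    obtain ⟨ha, hb⟩ := hlt i hi a b x h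
    rw [ih a ha (ha.trans hi), ih b hb (hb.trans hi)]

/-- `D` followed by the clause `C` with justification `w`. -/
def snoc (D : DagDeriv V) (C : Clause V) (w : Option (ℕ × ℕ × V)) : DagDeriv V where
  len := D.len + 1
  cl := Function.update D.cl D.len C
  just := Function.update D.just D.len w

section snoc

variable {C : Clause V} {w : Option (ℕ × ℕ × V)} {i : ℕ}

theorem cl_snoc_of_lt (hi : i < D.len) : (D.snoc C w).cl i = D.cl i :=
  Function.update_of_ne hi.ne _ _

theorem cl_snoc_len : (D.snoc C w).cl D.len = C :=
  Function.update_self _ _ _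

theorem just_snoc_of_ne (hi : i ≠ D.len) : (D.snoc C w).just i = D.just i :=
  Function.update_of_ne hi _ _

theorem just_snoc_len : (D.snoc C w).just D.len = w :=
  Function.update_self _ _ _

theorem usesVar_snoc (hD : D.ok Γ) (hi : i < D.len) {y : V} :
    (D.snoc C w).usesVar i y ↔ D.usesVar i y :=
  usesVar_congr
    (fun j hj a b x h =>
      have hab := (ok_iff.mp hD j hj).2 a b x h
      ⟨hab.1, hab.2.1⟩)
    (fun _ hj => just_snoc_of_ne hj.ne) hi

theorem ok_snoc (hD : D.ok Γ) (hnone : w = none → C ∈ Γ)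
    (hsome : ∀ a b x, w = some (a, b, x) →
      a < D.len ∧ b < D.len ∧ rstep x (D.cl a) (D.cl b) C) :
    (D.snoc C w).ok Γ := by
  refine ok_iff.mpr fun i hi => ?_
  rcases Nat.lt_succ_iff_lt_or_eq.mp hi with hi | rfl
  · rw [just_snoc_of_ne hi.ne, cl_snoc_of_lt hi]
    refine (ok_iff.mp hD i hi).imp_right fun h a b x hj => ?_
    obtain ⟨ha, hb, hstep⟩ := h a b x hj
    rw [cl_snoc_of_lt (ha.trans hi), cl_snoc_of_lt (hb.trans hi)]
    exact ⟨ha, hb, hstep⟩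
  · rw [just_snoc_len, cl_snoc_len]
    refine ⟨hnone, fun a b x hj => ?_⟩
    obtain ⟨ha, hb, hstep⟩ := hsome a b x hj
    rw [cl_snoc_of_lt ha, cl_snoc_of_lt hb]
    exact ⟨ha, hb, hstep⟩

end snoc

/-- A regular derivation from `Γ`. `DagDeriv.regular` also inspects the justifications of positions
beyond the length; they are required to be empty so that clauses can be appended. -/
structure Sound (Γ : Set (Clause V)) (D : DagDeriv V) : Prop where
  ok : D.ok Γ
  regular : D.regular
  just_eq_none : ∀ i, D.len ≤ i → D.just i = none

theorem Sound.snoc (hD : D.Sound Γ) {C : Clause V} {w : Option (ℕ × ℕ × V)}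
    (hnone : w = none → C ∈ Γ)
    (hsome : ∀ a b x, w = some (a, b, x) →
      a < D.len ∧ b < D.len ∧ rstep x (D.cl a) (D.cl b) C)
    (hreg : ∀ a b x, w = some (a, b, x) → ¬ D.usesVar a x ∧ ¬ D.usesVar b x) :
    (D.snoc C w).Sound Γ := by
  have hlast : ∀ i, D.len < i → (D.snoc C w).just i = none := fun i hi =>
    (just_snoc_of_ne hi.ne').trans (hD.just_eq_none i hi.le)
  refine ⟨ok_snoc hD.ok hnone hsome, regular_iff.mpr fun i a b x hj => ?_, hlast⟩
  rcases lt_trichotomy i D.len with hi | rfl | hi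
  · rw [just_snoc_of_ne hi.ne] at hj
    obtain ⟨ha, hb, -⟩ := (ok_iff.mp hD.ok i hi).2 a b x hj
    rw [usesVar_snoc hD.ok (ha.trans hi), usesVar_snoc hD.ok (hb.trans hi)]
    exact regular_iff.mp hD.regular i a b x hj
  · rw [just_snoc_len] at hj
    obtain ⟨ha, hb, -⟩ := hsome a b x hj
    rw [usesVar_snoc hD.ok ha, usesVar_snoc hD.ok hb]
    exact hreg a b x hj
  · simp [hlast i hi] at hj

/-- `D` contains the clause `C`, with a subderivation resolving exactly on the variables `W`. -/
def Derives (D : DagDeriv V) (C : Clause V) (W : Finset V) : Prop :=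
  ∃ i, i < D.len ∧ D.cl i = C ∧ ∀ x, D.usesVar i x ↔ x ∈ W

theorem Derives.snoc {C C' : Clause V} {W : Finset V} (h : D.Derives C W) (hD : D.ok Γ)
    (w : Option (ℕ × ℕ × V)) : (D.snoc C' w).Derives C W := by
  obtain ⟨i, hi, hcl, hW⟩ := h
  exact ⟨i, Nat.lt_succ_of_lt hi, (cl_snoc_of_lt hi).trans hcl, fun x =>
    (usesVar_snoc hD hi).trans (hW x)⟩

theorem Derives.snoc_resolvent {A B C : Clause V} {x : V} {W W' : Finset V}
    (hA : D.Derives A W) (hB : D.Derives B W') (hD : D.Sound Γ) (hx : x ∉ W) (hx' : x ∉ W')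
    (hC : rstep x A B C) :
    ∃ w, (D.snoc C w).Sound Γ ∧ (D.snoc C w).Derives C (insert x (W ∪ W')) := by
  obtain ⟨a, ha, rfl, hWa⟩ := hA
  obtain ⟨b, hb, rfl, hWb⟩ := hB
  refine ⟨some (a, b, x), hD.snoc (by simp) ?_ ?_, D.len, Nat.lt_succ_self _, cl_snoc_len,
    fun y => ?_⟩
  · rintro _ _ _ ⟨⟩
    exact ⟨ha, hb, hC⟩
  · rintro _ _ _ ⟨⟩
    exact ⟨by rwa [hWa], by rwa [hWb]⟩
  · rw [usesVar_iff, just_snoc_len]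
    simp [usesVar_snoc hD.ok ha, usesVar_snoc hD.ok hb, hWa, hWb]

end DagDeriv

/-- Some regular derivation from `Γ` with at most `n` clauses contains, for all `(C, W) ∈ F`, the
clause `C` with a subderivation resolving exactly on the variables `W`. -/
def RegDerivable {V : Type} [DecidableEq V] (Γ : Set (Clause V)) (n : ℕ)
    (F : Set (Clause V × Finset V)) : Prop :=
  ∃ D : DagDeriv V, D.Sound Γ ∧ D.len ≤ n ∧ ∀ P ∈ F, D.Derives P.1 P.2

namespace RegDerivable

variable {V : Type} [DecidableEq V] {Γ : Set (Clause V)} {n n' : ℕ}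
  {F F' : Set (Clause V × Finset V)}

theorem empty (Γ : Set (Clause V)) : RegDerivable Γ 0 ∅ :=
  ⟨⟨0, fun _ => ∅, fun _ => none⟩,
    ⟨fun _ hi => absurd hi (Nat.not_lt_zero _), fun _ _ _ _ h => by simp at h, fun _ _ => rfl⟩,
    le_rfl, fun _ h => h.elim⟩

theorem mono (h : RegDerivable Γ n F) (hn : n ≤ n') (hF : F' ⊆ F) : RegDerivable Γ n' F' :=
  let ⟨D, hD, hlen, hder⟩ := h
  ⟨D, hD, hlen.trans hn, fun P hP => hder P (hF hP)⟩

theorem insert_initial (h : RegDerivable Γ n F) {C : Clause V} (hC : C ∈ Γ) :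
    RegDerivable Γ (n + 1) (insert (C, ∅) F) := by
  obtain ⟨D, hD, hlen, hder⟩ := h
  refine ⟨D.snoc C none, hD.snoc (fun _ => hC) (by simp) (by simp), Nat.succ_le_succ hlen,
    Set.forall_mem_insert.mpr ⟨⟨D.len, Nat.lt_succ_self _, DagDeriv.cl_snoc_len, fun x => ?_⟩,
      fun P hP => (hder P hP).snoc hD.ok none⟩⟩
  rw [DagDeriv.usesVar_iff, DagDeriv.just_snoc_len]
  simp

theorem insert_resolvent (h : RegDerivable Γ n F) {A B C : Clause V} {W W' : Finset V} {x : V}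
    (hA : (A, W) ∈ F) (hB : (B, W') ∈ F) (hx : x ∉ W) (hx' : x ∉ W') (hC : rstep x A B C) :
    RegDerivable Γ (n + 1) (insert (C, insert x (W ∪ W')) F) := by
  obtain ⟨D, hD, hlen, hder⟩ := h
  obtain ⟨w, hsound, hCW⟩ := (hder _ hA).snoc_resolvent (hder _ hB) hD hx hx' hC
  exact ⟨D.snoc C w, hsound, Nat.succ_le_succ hlen,
    Set.forall_mem_insert.mpr ⟨hCW, fun P hP => (hder P hP).snoc hD.ok w⟩⟩

end RegDerivable

/-! ### Bypassing -/

/-- The largest index in `{1,…,k}` carrying the same stone as `a`: the max-bypasser of `a` if `a` is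
bypassed, and `a` itself otherwise. -/
def lastIdx (k : ℕ) (J : ℕ → ℕ) (a : ℕ) : ℕ :=
  Nat.findGreatest (fun b => J b = J a) k

section lastIdx

variable {G : StoneDag} {k : ℕ} {I J : ℕ → ℕ} {a b : ℕ}

theorem lastIdx_le : lastIdx k J a ≤ k :=
  Nat.findGreatest_le k

theorem le_lastIdx_of_eq (hb : b ≤ k) (h : J b = J a) : b ≤ lastIdx k J a :=
  Nat.le_findGreatest hb h

theorem le_lastIdx (ha : a ≤ k) : a ≤ lastIdx k J a :=
  le_lastIdx_of_eq ha rfl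

theorem apply_lastIdx (ha : a ≤ k) : J (lastIdx k J a) = J a :=
  Nat.findGreatest_spec (P := fun b => J b = J a) ha rfl

theorem lastIdx_mem_Icc (ha : a ∈ Finset.Icc 1 k) : lastIdx k J a ∈ Finset.Icc 1 k := by
  obtain ⟨h1, hk⟩ := Finset.mem_Icc.mp ha
  exact Finset.mem_Icc.mpr ⟨h1.trans (le_lastIdx hk), lastIdx_le⟩

theorem lastIdx_congr (h : J a = J b) : lastIdx k J a = lastIdx k J b := by
  rw [lastIdx, lastIdx, h]

theorem lastIdx_lastIdx (ha : a ≤ k) : lastIdx k J (lastIdx k J a) = lastIdx k J a :=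
  lastIdx_congr (apply_lastIdx ha)

theorem not_bypassed_iff (ha : a ≤ k) : ¬ bypassed k J a ↔ lastIdx k J a = a := by
  constructor
  · intro h
    by_contra hne
    exact h ⟨_, lt_of_le_of_ne (le_lastIdx ha) (Ne.symm hne), lastIdx_le, apply_lastIdx ha⟩
  · rintro h ⟨b, hab, hb, hJ⟩
    exact hab.not_ge ((le_lastIdx_of_eq hb hJ).trans h.le)

theorem maxByp_iff (ha : a ≤ k) : maxByp k J a b ↔ b = lastIdx k J a ∧ b ≠ a := by
  constructor
  · rintro ⟨hab, hb, hJ, hmax⟩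
    have hle := le_lastIdx_of_eq hb hJ
    exact ⟨hle.antisymm (hmax _ (hab.trans_le hle) lastIdx_le (apply_lastIdx ha)), hab.ne'⟩
  · rintro ⟨rfl, hne⟩
    exact ⟨lt_of_le_of_ne (le_lastIdx ha) (Ne.symm hne), lastIdx_le, apply_lastIdx ha,
      fun c _ hc hJ => le_lastIdx_of_eq hc hJ⟩

theorem lastIdx_eq_self_of_bidx (h : Bidx G k I J a) : lastIdx k J a = a :=
  (not_bypassed_iff h.2.1).mp h.2.2.1

theorem bplus_iff (ha : a ∈ Finset.Icc 1 k) :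
    Bplus G k I J a ↔ Bidx G k I J (lastIdx k J a) := by
  obtain ⟨h1, hk⟩ := Finset.mem_Icc.mp ha
  simp only [Bplus, maxByp_iff hk, h1, hk, true_and]
  constructor
  · rintro (hB | ⟨b, ⟨rfl, -⟩, hB⟩)
    · rwa [lastIdx_eq_self_of_bidx hB]
    · exact hB
  · intro hB
    by_cases hne : lastIdx k J a = a
    · exact Or.inl (hne ▸ hB)
    · exact Or.inr ⟨_, ⟨rfl, hne⟩, hB⟩

theorem bplus_congr (ha : a ∈ Finset.Icc 1 k) (hb : b ∈ Finset.Icc 1 k) (h : J a = J b) :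
    Bplus G k I J a ↔ Bplus G k I J b := by
  rw [bplus_iff ha, bplus_iff hb, lastIdx_congr h]

end lastIdx

/-! ### Support within `dom(C)` outside `B` -/

/-- The clause `¬p_{i_1,j_1} ∨ … ∨ ¬p_{i_k,j_k}` mentions increasing non-source vertices of `G` and
stones from `{1,…,m}`. -/
structure IsNonsourceClause (G : StoneDag) (m k : ℕ) (I J : ℕ → ℕ) : Prop where
  strictMonoOn : StrictMonoOn I (Finset.Icc 1 k)
  vertex_mem : ∀ a ∈ Finset.Icc 1 k, I a ∈ Finset.Icc 1 G.n
  stone_mem : ∀ a ∈ Finset.Icc 1 k, J a ∈ Finset.Icc 1 m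

theorem GoodC.isNonsourceClause {G : StoneDag} {m k : ℕ} {I J : ℕ → ℕ} (hC : GoodC G m k I J) :
    IsNonsourceClause G m k I J := by
  obtain ⟨hk1, hI1, hIk, hmono, hJ, -⟩ := hC
  have hmonoOn : StrictMonoOn I (Finset.Icc 1 k) := fun a ha b hb hab =>
    hmono a b (Finset.mem_Icc.mp ha).1 hab (Finset.mem_Icc.mp hb).2
  refine ⟨hmonoOn, fun a ha => ?_, fun a ha => ?_⟩
  · have hk := Finset.mem_Icc.mp ha
    exact Finset.mem_Icc.mpr
      ⟨hI1.ge.trans (hmonoOn.monotoneOn (Finset.left_mem_Icc.mpr hk1) ha hk.1),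
        (hmonoOn.monotoneOn ha (Finset.right_mem_Icc.mpr hk1) hk.2).trans hIk⟩
  · exact Finset.mem_Icc.mpr (hJ a (Finset.mem_Icc.mp ha).1 (Finset.mem_Icc.mp ha).2)

/-- One step of the closure defining `S_ℓ^B(C)`, taken from a vertex outside `B`. -/
def BStep (G : StoneDag) (k : ℕ) (I J : ℕ → ℕ) (a b : ℕ) : Prop :=
  ¬ Bidx G k I J a ∧ ((maxByp k J a b ∧ ¬ Bidx G k I J b) ∨
    (¬ bypassed k J a ∧ b ∈ Finset.Icc 1 k ∧ (I b = G.p1 (I a) ∨ I b = G.p2 (I a))))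

/-- Reachability along `BStep`: membership of `b` in `S_a^B(C)` if `i_a ∉ B`, and `b = a`
if `i_a ∈ B`. -/
def BReach (G : StoneDag) (k : ℕ) (I J : ℕ → ℕ) : ℕ → ℕ → Prop :=
  Relation.ReflTransGen (BStep G k I J)

section BReach

variable {G : StoneDag} {m k : ℕ} {I J : ℕ → ℕ} {a b l x : ℕ}

theorem SBmem.bStep (h : SBmem G k I J l a) (hab : BStep G k I J a b) : SBmem G k I J l b := by
  obtain ⟨ha, ⟨hmax, hb⟩ | ⟨hbyp, hb, hI⟩⟩ := hab
  · exact .byp a b h (Or.inr ha) hmax hb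
  · exact .pred a b h (Or.inr ha) hbyp (Finset.mem_Icc.mp hb).1 (Finset.mem_Icc.mp hb).2 hI

theorem sbmem_iff_bReach (hl : ¬ Bidx G k I J l) : SBmem G k I J l x ↔ BReach G k I J l x := by
  constructor
  · intro h
    induction h with
    | base => exact .refl
    | byp a b _ ha hmax hb ih =>
      exact ih.tail ⟨ha.elim (· ▸ hl) id, Or.inl ⟨hmax, hb⟩⟩
    | pred a b _ ha hbyp h1 hk hI ih =>
      exact ih.tail ⟨ha.elim (· ▸ hl) id, Or.inr ⟨hbyp, Finset.mem_Icc.mpr ⟨h1, hk⟩, hI⟩⟩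
  · intro h
    induction h with
    | refl => exact .base
    | tail _ hab ih => exact ih.bStep hab

theorem IsNonsourceClause.lt_of_bStep (hC : IsNonsourceClause G m k I J)
    (ha : a ∈ Finset.Icc 1 k) (h : BStep G k I J a b) : a < b ∧ b ∈ Finset.Icc 1 k := by
  obtain ⟨-, ⟨hmax, -⟩ | ⟨-, hb, hI⟩⟩ := h
  · exact ⟨hmax.1, Finset.mem_Icc.mpr ⟨(Finset.mem_Icc.mp ha).1.trans hmax.1.le, hmax.2.1⟩⟩
  · obtain ⟨h1, hn⟩ := Finset.mem_Icc.mp (hC.vertex_mem a ha)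
    refine ⟨(hC.strictMonoOn.lt_iff_lt ha hb).mp ?_, hb⟩
    rcases hI with hI | hI <;> rw [hI]
    exacts [G.p1_gt _ h1 hn, G.p2_gt _ h1 hn]

theorem IsNonsourceClause.bStep_mem_filter_sbmem (hC : IsNonsourceClause G m k I J)
    (ha : a ∈ (Finset.Icc 1 k).filter (SBmem G k I J l)) (h : BStep G k I J a b) :
    b ∈ (Finset.Icc 1 k).filter (SBmem G k I J l) :=
  let ⟨hak, ha⟩ := Finset.mem_filter.mp ha
  Finset.mem_filter.mpr ⟨(hC.lt_of_bStep hak h).2, ha.bStep h⟩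

theorem IsNonsourceClause.le_of_bReach (hC : IsNonsourceClause G m k I J)
    (ha : a ∈ Finset.Icc 1 k) (h : BReach G k I J a x) : a ≤ x ∧ x ∈ Finset.Icc 1 k := by
  induction h with
  | refl => exact ⟨le_rfl, ha⟩
  | tail _ hbc ih =>
    obtain ⟨hlt, hc⟩ := hC.lt_of_bStep ih.2 hbc
    exact ⟨ih.1.trans hlt.le, hc⟩

theorem bStep_lastIdx (ha : a ≤ k) (hne : lastIdx k J a ≠ a)
    (hB : ¬ Bidx G k I J (lastIdx k J a)) : BStep G k I J a (lastIdx k J a) :=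
  ⟨fun h => hne (lastIdx_eq_self_of_bidx h), Or.inl ⟨(maxByp_iff ha).mpr ⟨rfl, hne⟩, hB⟩⟩

theorem bReach_iff_lastIdx (ha : a ≤ k) : BReach G k I J a x ↔
    x = a ∨ (¬ Bidx G k I J (lastIdx k J a) ∧ BReach G k I J (lastIdx k J a) x) := by
  constructor
  · intro h
    rcases h.cases_head with rfl | ⟨b, ⟨haB, ⟨hmax, hb⟩ | ⟨hbyp, -⟩⟩, hbx⟩
    · exact Or.inl rfl
    · obtain ⟨rfl, -⟩ := (maxByp_iff ha).mp hmax
      exact Or.inr ⟨hb, hbx⟩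
    · rw [(not_bypassed_iff ha).mp hbyp]
      exact Or.inr ⟨haB, h⟩
  · rintro (rfl | ⟨hB, h⟩)
    · exact .refl
    · by_cases hne : lastIdx k J a = a
      · rwa [hne] at h
      · exact .head (bStep_lastIdx ha hne hB) h

theorem bReach_of_apply_eq (ha : a ≤ k) (hb : b ≤ k) (hJ : J a = J b)
    (h : BReach G k I J a x) : x = a ∨ BReach G k I J b x := by
  rw [bReach_iff_lastIdx ha] at h
  rw [bReach_iff_lastIdx hb, ← lastIdx_congr hJ]
  exact h.imp_right Or.inr

theorem IsNonsourceClause.exists_bStep_iff (hC : IsNonsourceClause G m k I J)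
    (hl : l ∈ Finset.Icc 1 k) (hlast : lastIdx k J l = l) (hB : ¬ Bidx G k I J l) :
    ∃ a₁ a₂, I a₁ = G.p1 (I l) ∧ I a₂ = G.p2 (I l) ∧
      ∀ b, BStep G k I J l b ↔ b = a₁ ∨ b = a₂ := by
  obtain ⟨h1, hk⟩ := Finset.mem_Icc.mp hl
  have hbyp : ¬ bypassed k J l := (not_bypassed_iff hk).mpr hlast
  have hdom : G.p1 (I l) ∈ domv k I ∧ G.p2 (I l) ∈ domv k I := by
    by_contra h
    exact hB ⟨h1, hk, hbyp, not_and_or.mp h⟩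
  obtain ⟨⟨a₁, h11, h1k, hI₁⟩, ⟨a₂, h21, h2k, hI₂⟩⟩ := hdom
  have ha₁ : a₁ ∈ Finset.Icc 1 k := Finset.mem_Icc.mpr ⟨h11, h1k⟩
  have ha₂ : a₂ ∈ Finset.Icc 1 k := Finset.mem_Icc.mpr ⟨h21, h2k⟩
  refine ⟨a₁, a₂, hI₁, hI₂, fun b => ⟨?_, ?_⟩⟩
  · rintro ⟨-, ⟨hmax, -⟩ | ⟨-, hb, hI⟩⟩
    · exact absurd ⟨b, hmax.1, hmax.2.1, hmax.2.2.1⟩ hbyp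
    · rw [← hI₁, ← hI₂] at hI
      exact hI.imp (hC.strictMonoOn.injOn hb ha₁) (hC.strictMonoOn.injOn hb ha₂)
  · rintro (rfl | rfl)
    exacts [⟨hB, Or.inr ⟨hbyp, ha₁, Or.inl hI₁⟩⟩, ⟨hB, Or.inr ⟨hbyp, ha₂, Or.inr hI₂⟩⟩]

theorem bReach_iff_of_bStep_iff {a₁ a₂ : ℕ} (hstep : ∀ b, BStep G k I J l b ↔ b = a₁ ∨ b = a₂) :
    BReach G k I J l x ↔ x = l ∨ BReach G k I J a₁ x ∨ BReach G k I J a₂ x := by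
  rw [BReach, Relation.ReflTransGen.cases_head_iff, eq_comm]
  simp only [hstep, or_and_right, exists_or, exists_eq_left]

end BReach

/-! ### The stones above a vertex -/

/-- The indices reachable from `a` along `BStep`. -/
noncomputable def reachSet (G : StoneDag) (k : ℕ) (I J : ℕ → ℕ) (a : ℕ) : Finset ℕ :=
  (Finset.Icc 1 k).filter (BReach G k I J a)

/-- The stones on the vertices of `B⁺` reachable from `a`. They occur negatively in the
clauses derived. -/
noncomputable def boundaryStones (G : StoneDag) (k : ℕ) (I J : ℕ → ℕ) (a : ℕ) : Finset ℕ :=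
  ((reachSet G k I J a).filter fun x => Bplus G k I J x).image J

/-- The stones on the vertices outside `B⁺` reachable from `a`. They are resolved on. -/
noncomputable def innerStones (G : StoneDag) (k : ℕ) (I J : ℕ → ℕ) (a : ℕ) : Finset ℕ :=
  ((reachSet G k I J a).filter fun x => ¬ Bplus G k I J x).image J

section stones

variable {G : StoneDag} {m k : ℕ} {I J : ℕ → ℕ} {a b l : ℕ}

theorem self_mem_reachSet (ha : a ∈ Finset.Icc 1 k) : a ∈ reachSet G k I J a :=
  Finset.mem_filter.mpr ⟨ha, .refl⟩

theorem IsNonsourceClause.le_of_mem_reachSet (hC : IsNonsourceClause G m k I J)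
    (ha : a ∈ Finset.Icc 1 k) {x : ℕ} (hx : x ∈ reachSet G k I J a) : a ≤ x :=
  (hC.le_of_bReach ha (Finset.mem_filter.mp hx).2).1

theorem reachSet_of_bidx_lastIdx (ha : a ∈ Finset.Icc 1 k) (hB : Bidx G k I J (lastIdx k J a)) :
    reachSet G k I J a = {a} := by
  ext x
  simp only [reachSet, Finset.mem_filter, bReach_iff_lastIdx (Finset.mem_Icc.mp ha).2, hB,
    not_true_eq_false, false_and, or_false, Finset.mem_singleton]
  exact and_iff_right_of_imp (· ▸ ha)

theorem reachSet_of_not_bidx_lastIdx (ha : a ∈ Finset.Icc 1 k)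
    (hB : ¬ Bidx G k I J (lastIdx k J a)) :
    reachSet G k I J a = insert a (reachSet G k I J (lastIdx k J a)) := by
  ext x
  simp only [reachSet, Finset.mem_filter, bReach_iff_lastIdx (Finset.mem_Icc.mp ha).2, hB,
    not_false_eq_true, true_and, Finset.mem_insert, and_or_left]
  exact or_congr_left (and_iff_right_of_imp (· ▸ ha))

theorem reachSet_subset_insert (ha : a ∈ Finset.Icc 1 k) (hb : b ∈ Finset.Icc 1 k)
    (hJ : J a = J b) : reachSet G k I J a ⊆ insert a (reachSet G k I J b) := fun x hx => by
  obtain ⟨hxk, hx⟩ := Finset.mem_filter.mp hx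
  refine Finset.mem_insert.mpr ?_
  refine (bReach_of_apply_eq (Finset.mem_Icc.mp ha).2 (Finset.mem_Icc.mp hb).2 hJ hx).imp_right ?_
  exact fun h => Finset.mem_filter.mpr ⟨hxk, h⟩

theorem image_filter_reachSet_subset {P : ℕ → Prop} [DecidablePred P]
    (ha : a ∈ Finset.Icc 1 k) (hb : b ∈ Finset.Icc 1 k) (hJ : J a = J b) (hP : P a → P b) :
    ((reachSet G k I J a).filter P).image J ⊆ ((reachSet G k I J b).filter P).image J := by
  simp only [Finset.image_subset_iff, Finset.mem_filter]
  rintro x ⟨hx, hPx⟩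
  rcases Finset.mem_insert.mp (reachSet_subset_insert ha hb hJ hx) with rfl | hx
  · rw [hJ]
    exact Finset.mem_image_of_mem J (Finset.mem_filter.mpr ⟨self_mem_reachSet hb, hP hPx⟩)
  · exact Finset.mem_image_of_mem J (Finset.mem_filter.mpr ⟨hx, hPx⟩)

theorem boundaryStones_congr (ha : a ∈ Finset.Icc 1 k) (hb : b ∈ Finset.Icc 1 k)
    (hJ : J a = J b) : boundaryStones G k I J a = boundaryStones G k I J b :=
  (image_filter_reachSet_subset ha hb hJ (bplus_congr ha hb hJ).mp).antisymm
    (image_filter_reachSet_subset hb ha hJ.symm (bplus_congr ha hb hJ).mpr)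

theorem innerStones_congr (ha : a ∈ Finset.Icc 1 k) (hb : b ∈ Finset.Icc 1 k)
    (hJ : J a = J b) : innerStones G k I J a = innerStones G k I J b :=
  (image_filter_reachSet_subset (P := fun x => ¬ Bplus G k I J x) ha hb hJ
    (bplus_congr ha hb hJ).not.mp).antisymm
    (image_filter_reachSet_subset (P := fun x => ¬ Bplus G k I J x) hb ha hJ.symm
      (bplus_congr ha hb hJ).not.mpr)

theorem boundaryStones_of_bidx_lastIdx (ha : a ∈ Finset.Icc 1 k)
    (hB : Bidx G k I J (lastIdx k J a)) : boundaryStones G k I J a = {J a} := by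
  simp [boundaryStones, reachSet_of_bidx_lastIdx ha hB, Finset.filter_singleton,
    (bplus_iff ha).mpr hB]

theorem innerStones_of_bidx_lastIdx (ha : a ∈ Finset.Icc 1 k)
    (hB : Bidx G k I J (lastIdx k J a)) : innerStones G k I J a = ∅ := by
  simp [innerStones, reachSet_of_bidx_lastIdx ha hB, Finset.filter_singleton,
    (bplus_iff ha).mpr hB]

theorem apply_mem_boundaryStones (ha : a ∈ Finset.Icc 1 k) (hB : Bplus G k I J a) :
    J a ∈ boundaryStones G k I J a :=
  Finset.mem_image_of_mem J (Finset.mem_filter.mpr ⟨self_mem_reachSet ha, hB⟩)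

theorem apply_mem_innerStones (ha : a ∈ Finset.Icc 1 k) (hB : ¬ Bplus G k I J a) :
    J a ∈ innerStones G k I J a :=
  Finset.mem_image_of_mem J (Finset.mem_filter.mpr ⟨self_mem_reachSet ha, hB⟩)

theorem bplus_of_apply_mem_boundaryStones (hb : b ∈ Finset.Icc 1 k)
    (h : J b ∈ boundaryStones G k I J a) : Bplus G k I J b := by
  obtain ⟨x, hx, hJ⟩ := Finset.mem_image.mp h
  obtain ⟨hx, hB⟩ := Finset.mem_filter.mp hx
  exact (bplus_congr (Finset.mem_filter.mp hx).1 hb hJ).mp hB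

theorem IsNonsourceClause.apply_notMem_innerStones (hC : IsNonsourceClause G m k I J)
    (ha : a ∈ Finset.Icc 1 k) (hlt : lastIdx k J b < lastIdx k J a) :
    J b ∉ innerStones G k I J a := by
  have hak := (Finset.mem_Icc.mp ha).2
  rw [innerStones_congr ha (lastIdx_mem_Icc ha) (apply_lastIdx hak).symm]
  intro h
  obtain ⟨x, hx, hJ⟩ := Finset.mem_image.mp h
  obtain ⟨hx, -⟩ := Finset.mem_filter.mp hx
  have hax := hC.le_of_mem_reachSet (lastIdx_mem_Icc ha) hx
  have hxb := le_lastIdx_of_eq (Finset.mem_Icc.mp (Finset.mem_filter.mp hx).1).2 hJ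
  exact (hlt.trans_le (hax.trans hxb)).false

theorem reachSet_of_bStep_iff (hl : l ∈ Finset.Icc 1 k) {a₁ a₂ : ℕ}
    (hstep : ∀ b, BStep G k I J l b ↔ b = a₁ ∨ b = a₂) :
    reachSet G k I J l = insert l (reachSet G k I J a₁ ∪ reachSet G k I J a₂) := by
  ext x
  simp only [reachSet, Finset.mem_filter, Finset.mem_insert, Finset.mem_union,
    bReach_iff_of_bStep_iff hstep, and_or_left]
  exact or_congr_left (and_iff_right_of_imp (· ▸ hl))

theorem boundaryStones_of_bStep_iff (hl : l ∈ Finset.Icc 1 k) {a₁ a₂ : ℕ}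
    (hstep : ∀ b, BStep G k I J l b ↔ b = a₁ ∨ b = a₂) (hB : ¬ Bplus G k I J l) :
    boundaryStones G k I J l = boundaryStones G k I J a₁ ∪ boundaryStones G k I J a₂ := by
  rw [boundaryStones, reachSet_of_bStep_iff hl hstep, Finset.filter_insert, if_neg hB,
    Finset.filter_union, Finset.image_union]
  rfl

theorem innerStones_of_bStep_iff (hl : l ∈ Finset.Icc 1 k) {a₁ a₂ : ℕ}
    (hstep : ∀ b, BStep G k I J l b ↔ b = a₁ ∨ b = a₂) (hB : ¬ Bplus G k I J l) :
    innerStones G k I J l =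
      insert (J l) (innerStones G k I J a₁ ∪ innerStones G k I J a₂) := by
  rw [innerStones, reachSet_of_bStep_iff hl hstep, Finset.filter_insert, if_pos hB,
    Finset.filter_union, Finset.image_insert, Finset.image_union]
  rfl

end stones

/-! ### The derived clauses -/

/-- The clause `⋁_{x ∈ X} ¬p_{i_x,j_x} ∨ ⋁_{y ∈ Y} ¬r_y ∨ r_j`. -/
def stoneCl (I J : ℕ → ℕ) (X Y : Finset ℕ) (j : ℕ) : Clause SV :=
  X.image (fun x => (SV.p (I x) (J x), false)) ∪ Y.image (fun y => (SV.r y, false)) ∪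
    {(SV.r j, true)}

/-- For an index `e` that is not bypassed with `i_e ∉ B`: the clause `C_e ∨ E_e ∨ r_{j_e}` and the
resolution variables of its derivation. -/
noncomputable def nodeLemma (G : StoneDag) (k : ℕ) (I J : ℕ → ℕ) (e : ℕ) :
    Clause SV × Finset SV :=
  (stoneCl I J (reachSet G k I J e) (boundaryStones G k I J e) (J e),
    ((innerStones G k I J e).erase (J e)).image SV.r)

section derivation

variable {G : StoneDag} {m k n : ℕ} {I J : ℕ → ℕ} {a a₁ a₂ j l : ℕ} {X Y W : Finset ℕ}
  {Γ : Set (Clause SV)} {F : Set (Clause SV × Finset SV)}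

theorem rstep_stoneCl {X' Y' : Finset ℕ} {j' : ℕ} (hj : j' ∈ Y) :
    rstep (SV.r j') (stoneCl I J X' Y' j') (stoneCl I J X Y j)
      (stoneCl I J (X ∪ X') (Y.erase j' ∪ Y') j) := by
  refine ⟨by simp [stoneCl], by simp [stoneCl, hj], ?_⟩
  ext ⟨v, s⟩
  cases v <;> cases s <;> simp [stoneCl, wres] <;> grind

theorem RegDerivable.insert_expand (hF : RegDerivable Γ n F) (ha : a ∈ Finset.Icc 1 k)
    (hX : a ∈ X) (hY : J a ∈ Y) (hW : J a ∉ W) (hmem : (stoneCl I J X Y j, W.image SV.r) ∈ F)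
    (hlast : ¬ Bidx G k I J (lastIdx k J a) → nodeLemma G k I J (lastIdx k J a) ∈ F) :
    RegDerivable Γ (n + 1)
      (insert (stoneCl I J (X ∪ reachSet G k I J a) (Y.erase (J a) ∪ boundaryStones G k I J a) j,
        (W ∪ innerStones G k I J a).image SV.r) F) := by
  by_cases hB : Bidx G k I J (lastIdx k J a)
  · rw [reachSet_of_bidx_lastIdx ha hB, boundaryStones_of_bidx_lastIdx ha hB,
      innerStones_of_bidx_lastIdx ha hB, Finset.union_empty, Finset.union_comm X,
      Finset.singleton_union, Finset.insert_eq_of_mem hX, Finset.union_comm (Y.erase _),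
      Finset.singleton_union, Finset.insert_erase hY, Set.insert_eq_of_mem hmem]
    exact hF.mono n.le_succ subset_rfl
  · have hJ := apply_lastIdx (J := J) (Finset.mem_Icc.mp ha).2
    have hstep := rstep_stoneCl (I := I) (J := J) (X := X) (j := j)
      (X' := reachSet G k I J (lastIdx k J a)) (Y' := boundaryStones G k I J a) hY
    have hlemma := hlast hB
    rw [nodeLemma, hJ, boundaryStones_congr (lastIdx_mem_Icc ha) ha hJ,
      innerStones_congr (lastIdx_mem_Icc ha) ha hJ] at hlemma
    have hvars : insert (SV.r (J a))
        (((innerStones G k I J a).erase (J a)).image SV.r ∪ W.image SV.r) =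
        (W ∪ innerStones G k I J a).image SV.r := by
      rw [← Finset.image_union, ← Finset.image_insert, ← Finset.insert_union, Finset.insert_erase
        (apply_mem_innerStones ha ((bplus_iff ha).not.mpr hB)), Finset.union_comm]
    have hreach : X ∪ reachSet G k I J a = X ∪ reachSet G k I J (lastIdx k J a) := by
      rw [reachSet_of_not_bidx_lastIdx ha hB, Finset.union_insert,
        Finset.insert_eq_of_mem (Finset.mem_union_left _ hX)]
    rw [← hvars, hreach]
    exact hF.insert_resolvent hlemma hmem (by simp) (by simpa using hW) hstep

theorem nodeLemma_eq_expand_of_apply_eq (hl : l ∈ Finset.Icc 1 k) (ha₁ : a₁ ∈ Finset.Icc 1 k)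
    (ha₂ : a₂ ∈ Finset.Icc 1 k) (hstep : ∀ b, BStep G k I J l b ↔ b = a₁ ∨ b = a₂)
    (hB : ¬ Bplus G k I J l) (hJ : J a₁ = J a₂) (hJl : J l ∉ innerStones G k I J a₂) :
    nodeLemma G k I J l =
      (stoneCl I J ({l, a₁, a₂} ∪ reachSet G k I J a₂)
          (({J a₁, J a₂} : Finset ℕ).erase (J a₂) ∪ boundaryStones G k I J a₂) (J l),
        (∅ ∪ innerStones G k I J a₂).image SV.r) := by
  have hreach : {l, a₁, a₂} ∪ reachSet G k I J a₂ = reachSet G k I J l := by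
    have h₁ := self_mem_reachSet (G := G) (I := I) (J := J) ha₁
    have h₂ := self_mem_reachSet (G := G) (I := I) (J := J) ha₂
    have hsub := reachSet_subset_insert (G := G) (I := I) ha₁ ha₂ hJ
    rw [reachSet_of_bStep_iff hl hstep]
    grind
  rw [nodeLemma, ← hreach, boundaryStones_of_bStep_iff hl hstep hB,
    innerStones_of_bStep_iff hl hstep hB, boundaryStones_congr ha₁ ha₂ hJ,
    innerStones_congr ha₁ ha₂ hJ, Finset.union_self, Finset.union_self,
    Finset.erase_insert hJl, hJ]
  simp

theorem nodeLemma_eq_expand_expand (hl : l ∈ Finset.Icc 1 k) (ha₁ : a₁ ∈ Finset.Icc 1 k)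
    (ha₂ : a₂ ∈ Finset.Icc 1 k) (hstep : ∀ b, BStep G k I J l b ↔ b = a₁ ∨ b = a₂)
    (hB : ¬ Bplus G k I J l) (hJl₁ : J l ∉ innerStones G k I J a₁)
    (hJl₂ : J l ∉ innerStones G k I J a₂) :
    nodeLemma G k I J l =
      (stoneCl I J ({l, a₁, a₂} ∪ reachSet G k I J a₂ ∪ reachSet G k I J a₁)
          ((({J a₁, J a₂} : Finset ℕ).erase (J a₂) ∪ boundaryStones G k I J a₂).erase (J a₁) ∪
            boundaryStones G k I J a₁) (J l),
        (∅ ∪ innerStones G k I J a₂ ∪ innerStones G k I J a₁).image SV.r) := by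
  have hreach : {l, a₁, a₂} ∪ reachSet G k I J a₂ ∪ reachSet G k I J a₁ = reachSet G k I J l := by
    have h₁ := self_mem_reachSet (G := G) (I := I) (J := J) ha₁
    have h₂ := self_mem_reachSet (G := G) (I := I) (J := J) ha₂
    rw [reachSet_of_bStep_iff hl hstep]
    grind
  have hbd : (({J a₁, J a₂} : Finset ℕ).erase (J a₂) ∪ boundaryStones G k I J a₂).erase (J a₁) ∪
      boundaryStones G k I J a₁ = boundaryStones G k I J l := by
    have h : J a₁ ∈ boundaryStones G k I J a₂ → J a₁ ∈ boundaryStones G k I J a₁ := fun h =>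
      apply_mem_boundaryStones ha₁ (bplus_of_apply_mem_boundaryStones ha₁ h)
    rw [boundaryStones_of_bStep_iff hl hstep hB]
    grind
  rw [nodeLemma, hreach, hbd, innerStones_of_bStep_iff hl hstep hB,
    Finset.erase_insert (Finset.notMem_union.mpr ⟨hJl₁, hJl₂⟩), Finset.empty_union,
    Finset.union_comm (innerStones G k I J a₁)]

theorem IsNonsourceClause.apply_notMem_innerStones_of_bStep (hC : IsNonsourceClause G m k I J)
    (hl : l ∈ Finset.Icc 1 k) (hlast : lastIdx k J l = l) (h : BStep G k I J l a) :
    J l ∉ innerStones G k I J a := by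
  obtain ⟨hlt, ha⟩ := hC.lt_of_bStep hl h
  refine hC.apply_notMem_innerStones ha ?_
  rw [hlast]
  exact hlt.trans_le (le_lastIdx (Finset.mem_Icc.mp ha).2)

theorem RegDerivable.insert_nodeLemma (hC : IsNonsourceClause G m k I J)
    (hF : RegDerivable Γ n F) (hl : l ∈ Finset.Icc 1 k) (hlast : lastIdx k J l = l)
    (hB : ¬ Bidx G k I J l) (hstep : ∀ b, BStep G k I J l b ↔ b = a₁ ∨ b = a₂)
    (hinit : stoneCl I J {l, a₁, a₂} {J a₁, J a₂} (J l) ∈ Γ)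
    (hmem : ∀ a, BStep G k I J l a → ¬ Bidx G k I J (lastIdx k J a) →
      nodeLemma G k I J (lastIdx k J a) ∈ F) :
    RegDerivable Γ (n + 3) (insert (nodeLemma G k I J l) F) := by
  wlog hle : lastIdx k J a₁ ≤ lastIdx k J a₂ generalizing a₁ a₂
  · refine this (a₁ := a₂) (a₂ := a₁) (fun b => (hstep b).trans or_comm) ?_ (le_of_not_ge hle)
    rwa [Finset.pair_comm a₂, Finset.pair_comm (J a₂)]
  have h₁ : BStep G k I J l a₁ := (hstep a₁).mpr (Or.inl rfl)
  have h₂ : BStep G k I J l a₂ := (hstep a₂).mpr (Or.inr rfl)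
  have ha₁ := (hC.lt_of_bStep hl h₁).2
  have ha₂ := (hC.lt_of_bStep hl h₂).2
  have hBl : ¬ Bplus G k I J l := by rwa [bplus_iff hl, hlast]
  have hJl₁ := hC.apply_notMem_innerStones_of_bStep hl hlast h₁
  have hJl₂ := hC.apply_notMem_innerStones_of_bStep hl hlast h₂
  have hfirst := (hF.insert_initial hinit).insert_expand (G := G) (a := a₂) (W := ∅) ha₂
    (by simp) (by simp) (by simp) (Set.mem_insert _ _) fun h => Or.inr (hmem a₂ h₂ h)
  by_cases hJ : J a₁ = J a₂
  · rw [nodeLemma_eq_expand_of_apply_eq hl ha₁ ha₂ hstep hBl hJ hJl₂]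
    exact hfirst.mono (Nat.le_succ _) (Set.insert_subset_insert (Set.subset_insert _ _))
  · have hlt : lastIdx k J a₁ < lastIdx k J a₂ := hle.lt_of_ne fun h => hJ <| by
      rw [← apply_lastIdx (J := J) (Finset.mem_Icc.mp ha₁).2, h,
        apply_lastIdx (J := J) (Finset.mem_Icc.mp ha₂).2]
    have hsecond := hfirst.insert_expand (G := G) (a := a₁) ha₁ (by simp) (by simp [hJ])
      (by simpa using hC.apply_notMem_innerStones ha₂ hlt) (Set.mem_insert _ _)
      fun h => Or.inr (Or.inr (hmem a₁ h₁ h))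
    rw [nodeLemma_eq_expand_expand hl ha₁ ha₂ hstep hBl hJl₁ hJl₂]
    exact hsecond.mono le_rfl (Set.insert_subset_insert
      ((Set.subset_insert _ _).trans (Set.subset_insert _ _)))

theorem IsNonsourceClause.stoneCl_mem_stoneClauses (hC : IsNonsourceClause G m k I J)
    (hl : l ∈ Finset.Icc 1 k) (hlast : lastIdx k J l = l) (h₁ : BStep G k I J l a₁)
    (h₂ : BStep G k I J l a₂) (hI₁ : I a₁ = G.p1 (I l)) (hI₂ : I a₂ = G.p2 (I l)) :
    stoneCl I J {l, a₁, a₂} {J a₁, J a₂} (J l) ∈ stoneClauses G m := by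
  have hne : ∀ a, BStep G k I J l a → J l ≠ J a := fun a h hJ => by
    obtain ⟨hlt, ha⟩ := hC.lt_of_bStep hl h
    exact hlt.not_ge ((le_lastIdx_of_eq (Finset.mem_Icc.mp ha).2 hJ.symm).trans hlast.le)
  obtain ⟨hIl, hIln⟩ := Finset.mem_Icc.mp (hC.vertex_mem l hl)
  obtain ⟨hJl, hJlm⟩ := Finset.mem_Icc.mp (hC.stone_mem l hl)
  obtain ⟨hJ₁, hJ₁m⟩ := Finset.mem_Icc.mp (hC.stone_mem a₁ (hC.lt_of_bStep hl h₁).2)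
  obtain ⟨hJ₂, hJ₂m⟩ := Finset.mem_Icc.mp (hC.stone_mem a₂ (hC.lt_of_bStep hl h₂).2)
  refine Or.inr ⟨I l, J l, J a₁, J a₂, hIl, hIln, hJl, hJlm, hJ₁, hJ₁m, hJ₂, hJ₂m,
    hne a₁ h₁, hne a₂ h₂, ?_⟩
  rw [← hI₁, ← hI₂]
  ext x
  simp only [stoneCl, Finset.image_insert, Finset.image_singleton, Finset.mem_union,
    Finset.mem_insert, Finset.mem_singleton]
  tauto

theorem lastIdx_mem_of_closed {T : Finset ℕ} (ha : a ≤ k) (haT : a ∈ T)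
    (hclosed : ∀ b, BStep G k I J a b → b ∈ T) (hB : ¬ Bidx G k I J (lastIdx k J a)) :
    lastIdx k J a ∈ T := by
  by_cases hne : lastIdx k J a = a
  · rwa [hne]
  · exact hclosed _ (bStep_lastIdx ha hne hB)

theorem IsNonsourceClause.regDerivable_nodeLemma (hC : IsNonsourceClause G m k I J)
    {T : Finset ℕ} (hT : T ⊆ Finset.Icc 1 k)
    (hclosed : ∀ a ∈ T, ∀ b, BStep G k I J a b → b ∈ T) :
    RegDerivable (stoneClauses G m) (3 * T.card)
      (nodeLemma G k I J '' {e | e ∈ T ∧ lastIdx k J e = e ∧ ¬ Bidx G k I J e}) := by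
  induction T using Finset.induction_on_min with
  | empty => simpa using RegDerivable.empty (stoneClauses G m)
  | insert l T hmin ih =>
    obtain ⟨hl, hTk⟩ := Finset.insert_subset_iff.mp hT
    have hlT : l ∉ T := fun h => (hmin l h).false
    have hclosed' : ∀ a ∈ insert l T, ∀ b, BStep G k I J a b → b ∈ T := fun a ha b hab =>
      Finset.mem_of_mem_insert_of_ne (hclosed a ha b hab) <| by
        have hle : l ≤ a := (Finset.mem_insert.mp ha).elim Eq.ge fun h => (hmin a h).le
        exact (hle.trans_lt (hC.lt_of_bStep (hT ha) hab).1).ne'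
    have hclT : ∀ a ∈ T, ∀ b, BStep G k I J a b → b ∈ T := fun a ha =>
      hclosed' a (Finset.mem_insert_of_mem ha)
    have hF := ih hTk hclT
    rw [Finset.card_insert_of_notMem hlT, mul_add, mul_one]
    by_cases hroot : lastIdx k J l = l ∧ ¬ Bidx G k I J l
    · obtain ⟨a₁, a₂, hI₁, hI₂, hstep⟩ := hC.exists_bStep_iff hl hroot.1 hroot.2
      have hinit := hC.stoneCl_mem_stoneClauses hl hroot.1 ((hstep a₁).mpr (Or.inl rfl))
        ((hstep a₂).mpr (Or.inr rfl)) hI₁ hI₂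
      refine (hF.insert_nodeLemma hC hl hroot.1 hroot.2 hstep hinit fun a hla hB => ?_).mono
        le_rfl ?_
      · have ha : a ∈ T := hclosed' l (Finset.mem_insert_self l T) a hla
        exact ⟨_, ⟨lastIdx_mem_of_closed (Finset.mem_Icc.mp (hTk ha)).2 ha (hclT a ha) hB,
          lastIdx_lastIdx (Finset.mem_Icc.mp (hTk ha)).2, hB⟩, rfl⟩
      · rintro _ ⟨e, ⟨he, he'⟩, rfl⟩
        exact (Finset.mem_insert.mp he).imp (congrArg _) fun he => ⟨e, ⟨he, he'⟩, rfl⟩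
    · refine hF.mono (Nat.le_add_right _ _) (Set.image_mono ?_)
      rintro e ⟨he, he'⟩
      exact ⟨Finset.mem_of_mem_insert_of_ne he fun h => hroot (h ▸ he'), he'⟩

theorem mem_Icc_and_sbmem_iff (ha : a ∈ Finset.Icc 1 k) (hB : ¬ Bplus G k I J a) {x : ℕ} :
    x ∈ Finset.Icc 1 k ∧ SBmem G k I J a x ↔ x = a ∨ x ∈ reachSet G k I J (lastIdx k J a) := by
  rw [← Finset.mem_insert, ← reachSet_of_not_bidx_lastIdx ha ((bplus_iff ha).not.mp hB), reachSet,
    Finset.mem_filter, sbmem_iff_bReach fun h => hB (Or.inl h)]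

theorem IsNonsourceClause.clc_eq (hC : IsNonsourceClause G m k I J) (ha : a ∈ Finset.Icc 1 k)
    (hB : ¬ Bplus G k I J a) :
    Clc G k I J a =
      (reachSet G k I J (lastIdx k J a)).image fun x => (SV.p (I x) (J x), false) := by
  refine congrArg (Finset.image _) (Finset.ext fun x => ?_)
  have hk := (Finset.mem_Icc.mp ha).2
  rw [Finset.mem_filter, ← and_assoc, mem_Icc_and_sbmem_iff ha hB]
  constructor
  · rintro ⟨rfl | hx, hbyp⟩
    · have hlast := (not_bypassed_iff hk).mp fun h => hbyp ⟨rfl, h⟩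
      rw [hlast]
      exact self_mem_reachSet ha
    · exact hx
  · refine fun hx => ⟨Or.inr hx, ?_⟩
    rintro ⟨rfl, hbyp⟩
    have hle := hC.le_of_mem_reachSet (lastIdx_mem_Icc ha) hx
    exact (not_bypassed_iff hk).mpr (hle.antisymm (le_lastIdx hk)) hbyp

theorem elc_eq (ha : a ∈ Finset.Icc 1 k) (hB : ¬ Bplus G k I J a) :
    Elc G k I J a =
      (boundaryStones G k I J (lastIdx k J a)).image fun y => (SV.r y, false) := by
  rw [boundaryStones, Finset.image_image]
  refine congrArg (Finset.image _) (Finset.ext fun x => ?_)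
  rw [Finset.mem_filter, Finset.mem_filter, ← and_assoc, mem_Icc_and_sbmem_iff ha hB]
  constructor
  · rintro ⟨rfl | hx, hBx, -⟩
    exacts [absurd hBx hB, ⟨hx, hBx⟩]
  · rintro ⟨hx, hBx⟩
    exact ⟨Or.inr hx, hBx, fun _ h => hB (h ▸ hBx)⟩

theorem IsNonsourceClause.clc_union_elc_eq (hC : IsNonsourceClause G m k I J)
    (ha : a ∈ Finset.Icc 1 k) (hB : ¬ Bplus G k I J a) :
    Clc G k I J a ∪ Elc G k I J a ∪ {(SV.r (J a), true)} =
      (nodeLemma G k I J (lastIdx k J a)).1 := by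
  rw [hC.clc_eq ha hB, elc_eq ha hB, nodeLemma, stoneCl,
    apply_lastIdx (J := J) (Finset.mem_Icc.mp ha).2]

theorem mem_nodeLemma_snd_iff (ha : a ∈ Finset.Icc 1 k) (hB : ¬ Bplus G k I J a) (x : SV) :
    x ∈ (nodeLemma G k I J (lastIdx k J a)).2 ↔ ∃ b, 1 ≤ b ∧ b ≤ k ∧ x = SV.r (J b) ∧
      J b ≠ J a ∧ SBmem G k I J a b ∧ ¬ Bplus G k I J b := by
  have hJ := apply_lastIdx (J := J) (Finset.mem_Icc.mp ha).2
  have hBa : ¬ Bidx G k I J a := fun h => hB (Or.inl h)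
  rw [nodeLemma, hJ, innerStones_congr (lastIdx_mem_Icc ha) ha hJ]
  simp only [innerStones, reachSet, Finset.mem_image, Finset.mem_erase, Finset.mem_filter,
    Finset.mem_Icc, sbmem_iff_bReach hBa]
  constructor
  · rintro ⟨_, ⟨hne, b, ⟨⟨⟨h1, hk⟩, hab⟩, hBb⟩, rfl⟩, rfl⟩
    exact ⟨b, h1, hk, rfl, hne, hab, hBb⟩
  · rintro ⟨b, h1, hk, rfl, hne, hab, hBb⟩
    exact ⟨_, ⟨hne, b, ⟨⟨⟨h1, hk⟩, hab⟩, hBb⟩, rfl⟩, rfl⟩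

end derivation

theorem Lprime_tq_general {G : StoneDag} {m k : ℕ} {I J : ℕ → ℕ}
    (hC : IsNonsourceClause G m k I J) {T : Finset ℕ} (hT : T ⊆ Finset.Icc 1 k)
    (hclosed : ∀ a ∈ T, ∀ b, BStep G k I J a b → b ∈ T) :
    ∃ D : DagDeriv SV, D.ok (stoneClauses G m) ∧ D.regular ∧ D.len ≤ 3 * T.card ∧
      ∀ ℓ ∈ T, ¬ Bplus G k I J ℓ →
        ∃ idx, idx < D.len ∧
          D.cl idx = Clc G k I J ℓ ∪ Elc G k I J ℓ ∪ {(SV.r (J ℓ), true)} ∧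
          ∀ x, D.usesVar idx x ↔
            ∃ ℓ', 1 ≤ ℓ' ∧ ℓ' ≤ k ∧ x = SV.r (J ℓ') ∧ J ℓ' ≠ J ℓ ∧
              SBmem G k I J ℓ ℓ' ∧ ¬ Bplus G k I J ℓ' := by
  obtain ⟨D, hD, hlen, hder⟩ := hC.regDerivable_nodeLemma hT hclosed
  refine ⟨D, hD.ok, hD.regular, hlen, fun ℓ hℓ hB => ?_⟩
  have hℓk := (Finset.mem_Icc.mp (hT hℓ)).2
  have hlast : ¬ Bidx G k I J (lastIdx k J ℓ) := (bplus_iff (hT hℓ)).not.mp hB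
  obtain ⟨idx, hidx, hcl, hvars⟩ := hder _ ⟨_, ⟨lastIdx_mem_of_closed hℓk hℓ (hclosed ℓ hℓ) hlast,
    lastIdx_lastIdx hℓk, hlast⟩, rfl⟩
  exact ⟨idx, hidx, hcl.trans (hC.clc_union_elc_eq (hT hℓ) hB).symm, fun x =>
    (hvars x).trans (mem_nodeLemma_snd_iff (hT hℓ) hB x)⟩

/-- for `i_{t_q} ∈ B₁ ∪ {1}` with `i_{t_q} ∉ B⁺∖B`, a regular
dag-like derivation of size `O(N_q)` containing every clause `C_ℓ ∨ E_ℓ ∨ r_{j_ℓ}`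
for `i_ℓ ∈ S_{t_q}^B(C) ∖ B⁺`, whose subderivation uses exactly the stated
resolution variables. -/
theorem Lprime_tq : ∃ c : ℕ, ∀ (G : StoneDag) (m k : ℕ) (I J : ℕ → ℕ),
    GoodC G m k I J →
    ∀ (r : ℕ) (t : ℕ → ℕ), EnumB G k I J r t →
    ∀ q, 1 ≤ q → q ≤ r →
    (B1idx G k I J (t q) ∨ t q = 1) →
    ¬ (Bplus G k I J (t q) ∧ ¬ Bidx G k I J (t q)) →
    ∃ D : DagDeriv SV, D.ok (stoneClauses G m) ∧ D.regular ∧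
      D.len ≤ c * ((Finset.Icc 1 k).filter fun a => SBmem G k I J (t q) a).card ∧
      ∀ ℓ, 1 ≤ ℓ → ℓ ≤ k → SBmem G k I J (t q) ℓ → ¬ Bplus G k I J ℓ →
        ∃ idx, idx < D.len ∧
          D.cl idx = Clc G k I J ℓ ∪ Elc G k I J ℓ ∪ {(SV.r (J ℓ), true)} ∧
          ∀ x, D.usesVar idx x ↔
            ∃ ℓ', 1 ≤ ℓ' ∧ ℓ' ≤ k ∧ x = SV.r (J ℓ') ∧ J ℓ' ≠ J ℓ ∧
              SBmem G k I J ℓ ℓ' ∧ ¬ Bplus G k I J ℓ' := by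
  refine ⟨3, fun G m k I J hC r t _ q _ _ _ _ => ?_⟩
  obtain ⟨D, hok, hreg, hlen, hder⟩ := Lprime_tq_general hC.isNonsourceClause
    (Finset.filter_subset _ _) fun _ ha _ => hC.isNonsourceClause.bStep_mem_filter_sbmem ha
  exact ⟨D, hok, hreg, hlen, fun ℓ h1 hk hℓ hB =>
    hder ℓ (Finset.mem_filter.mpr ⟨Finset.mem_Icc.mpr ⟨h1, hk⟩, hℓ⟩) hB⟩
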